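/- arXiv:2408.07232 — 3 statements merged into one kernel-verified Lean document; each statement's English description precedes it below -/
import Mathlib

section
/- Let C be a Tor-∏-orthogonal left R-module. Then the class PG_CF(R) of projectively coresolved G_C-flat modules is right Add_R(C)-periodic: an R-module M belongs to PG_CF(R) if and only if there exists a short exact sequence 0 → M → A → G → 0 with A ∈ Add_R(C) and G ∈ PG_CF(R). -/
open CategoryTheory CategoryTheory.Limits

set_option autoImplicit false

universe u

variable {R : Type u} [CommRing R]

/-- A short exact sequence of `R`-modules encoded by two linear maps. -/
def IsSES {A B C : ModuleCat.{u} R} (f : A →ₗ[R] B) (g : B →ₗ[R] C) : Prop :=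
  Function.Injective f ∧ Function.Exact f g ∧ Function.Surjective g

/-- `Add_R(C)`: direct summands of direct sums of copies of `C`. -/
def AddClass (C : ModuleCat.{u} R) : ModuleCat.{u} R → Prop := fun M =>
  ∃ (ι : Type u) (s : M →ₗ[R] (ι →₀ C)) (p : (ι →₀ C) →ₗ[R] M), p ∘ₗ s = LinearMap.id

/-- `Prod_R(C)`: direct summands of direct products of copies of `C`. -/
def ProdClass (C : ModuleCat.{u} R) : ModuleCat.{u} R → Prop := fun M =>
  ∃ (ι : Type u) (s : M →ₗ[R] (ι → C)) (p : (ι → C) →ₗ[R] M), p ∘ₗ s = LinearMap.id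

/-- The character module `C⁺ = Hom_ℤ(C, ℚ/ℤ)` as an `R`-module. -/
noncomputable def charM (C : ModuleCat.{u} R) : ModuleCat.{u} R :=
  ModuleCat.of R (CharacterModule C)

/-- `C` is Tor-∏-orthogonal: `Tor^R_i((C⁺)^I, C) = 0` for all `i ≥ 1` and all sets `I`. -/
def TorProdOrthogonal (C : ModuleCat.{u} R) : Prop :=
  ∀ (I : Type u) (i : ℕ), 1 ≤ i →
    Limits.IsZero (((Tor (ModuleCat.{u} R) i).obj
      (ModuleCat.of R (I → CharacterModule C))).obj C)

/-- A totally acyclic complex `⋯ → P₁ → P₀ → A₀ → A₁ → ⋯` with the `Pᵢ` projective,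
the `Aⱼ` in `Add_R(C)`, which stays exact after `Y ⊗_R -` for `Y ∈ Prod_R(C⁺)`. -/
structure PGCFComplex (C : ModuleCat.{u} R) where
  P : ℕ → ModuleCat.{u} R
  A : ℕ → ModuleCat.{u} R
  projP : ∀ n, Module.Projective R (P n)
  memA : ∀ n, AddClass C (A n)
  dP : ∀ n, P (n + 1) →ₗ[R] P n
  mid : P 0 →ₗ[R] A 0
  dA : ∀ n, A n →ₗ[R] A (n + 1)
  exact_P : ∀ n, Function.Exact (dP (n + 1)) (dP n)
  exact_mid : Function.Exact (dP 0) mid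
  exact_A0 : Function.Exact mid (dA 0)
  exact_A : ∀ n, Function.Exact (dA n) (dA (n + 1))
  tensor_exact : ∀ Y : ModuleCat.{u} R, ProdClass (charM C) Y →
    (∀ n, Function.Exact (LinearMap.lTensor Y (dP (n + 1))) (LinearMap.lTensor Y (dP n))) ∧
    Function.Exact (LinearMap.lTensor Y (dP 0)) (LinearMap.lTensor Y mid) ∧
    Function.Exact (LinearMap.lTensor Y mid) (LinearMap.lTensor Y (dA 0)) ∧
    ∀ n, Function.Exact (LinearMap.lTensor Y (dA n)) (LinearMap.lTensor Y (dA (n + 1)))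

/-- `M` is projectively coresolved `G_C`-flat. -/
def IsPGCF (C M : ModuleCat.{u} R) : Prop :=
  ∃ X : PGCFComplex C, Nonempty (M ≃ₗ[R] ↥(LinearMap.range X.mid))

/-!
Let `0 → M → A → G → 0` be exact with `A ∈ Add_R(C)`, and let `Y ∈ Prod_R(C⁺)`. Orthogonality gives
`Tor_{≥ 1}(Y, A) = 0`, so the long exact sequence says that `Tor_{≥ 1}(Y, G) = 0` if and only if
`Tor_{≥ 1}(Y, M) = 0` and `Y ⊗ M → Y ⊗ A` is injective. This injectivity is exactly what is needed
to splice the sequence with a tensor-exact `Add_R(C)`-coresolution of `G`.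

The long exact sequence used here is that of `Ext(-, Y⁺)`, which is transported to `Tor(Y, -)`
through the equivalence `Tor_i(Y, M) = 0 ↔ Extⁱ(M, Y⁺) = 0`.
-/

open CategoryTheory.Abelian

section Exactness

variable {M N P Q : Type*} [AddCommGroup M] [AddCommGroup N] [AddCommGroup P] [AddCommGroup Q]
  [Module R M] [Module R N] [Module R P] [Module R Q]

theorem injective_iff_exact_comp {f : M →ₗ[R] N} {g : N →ₗ[R] P} (hfg : Function.Exact f g)
    (hg : Function.Surjective g) (i : P →ₗ[R] Q) :
    Function.Injective i ↔ Function.Exact f (i ∘ₗ g) := by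
  refine ⟨fun hi => hi.comp_exact_iff_exact.2 hfg, fun h => ?_⟩
  rw [injective_iff_map_eq_zero]
  intro z hz
  obtain ⟨y, rfl⟩ := hg z
  exact (hfg y).2 ((h y).1 hz)

variable (Y : Type*) [AddCommGroup Y] [Module R Y]

theorem lTensor_injective_iff_exact_comp {f : M →ₗ[R] N} {g : N →ₗ[R] P}
    (hfg : Function.Exact f g) (hg : Function.Surjective g) (i : P →ₗ[R] Q) :
    Function.Injective (i.lTensor Y) ↔
      Function.Exact (f.lTensor Y) ((i ∘ₗ g).lTensor Y) := by
  rw [LinearMap.lTensor_comp]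
  exact injective_iff_exact_comp (lTensor_exact Y hfg hg) (LinearMap.lTensor_surjective Y hg) _

theorem lTensor_comp_exact_iff_of_surjective {f : M →ₗ[R] N} (hf : Function.Surjective f)
    (i : N →ₗ[R] P) (g : P →ₗ[R] Q) :
    Function.Exact ((i ∘ₗ f).lTensor Y) (g.lTensor Y) ↔
      Function.Exact (i.lTensor Y) (g.lTensor Y) := by
  rw [LinearMap.lTensor_comp]
  exact (LinearMap.lTensor_surjective Y hf).comp_exact_iff_exact

theorem nonempty_linearEquiv_range_iff (f : N →ₗ[R] P) :
    Nonempty (M ≃ₗ[R] LinearMap.range f) ↔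
      ∃ (p : N →ₗ[R] M) (i : M →ₗ[R] P),
        Function.Surjective p ∧ Function.Injective i ∧ i ∘ₗ p = f := by
  constructor
  · rintro ⟨e⟩
    refine ⟨e.symm.toLinearMap ∘ₗ f.rangeRestrict, (LinearMap.range f).subtype ∘ₗ e.toLinearMap,
      e.symm.surjective.comp f.surjective_rangeRestrict,
      Subtype.val_injective.comp e.injective, ?_⟩
    ext x
    simp
  · rintro ⟨p, i, hp, hi, rfl⟩
    refine ⟨(LinearEquiv.ofInjective i hi).trans (LinearEquiv.ofEq _ _ ?_)⟩
    rw [LinearMap.range_comp_of_range_eq_top i (LinearMap.range_eq_top.2 hp)]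

theorem finsupp_mapRange_exact (ι : Type*) {f : M →ₗ[R] N} {g : N →ₗ[R] P}
    (h : Function.Exact f g) :
    Function.Exact (Finsupp.mapRange.linearMap (α := ι) f)
      (Finsupp.mapRange.linearMap (α := ι) g) := by
  intro x
  change _ ↔ x ∈ Set.range (Finsupp.mapRange (α := ι) f (map_zero f))
  rw [Finsupp.range_mapRange, Finsupp.ext_iff]
  exact forall_congr' fun i => h (x i)

theorem finsuppRight_comp_lTensor_mapRange (ι : Type*) [DecidableEq ι] (f : M →ₗ[R] N) :
    (TensorProduct.finsuppRight R R Y N ι).toLinearMap ∘ₗ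
        (Finsupp.mapRange.linearMap (α := ι) f).lTensor Y =
      Finsupp.mapRange.linearMap (α := ι) (f.lTensor Y) ∘ₗ
        (TensorProduct.finsuppRight R R Y M ι).toLinearMap := by
  refine TensorProduct.ext' fun y m => ?_
  ext i
  simp

theorem lTensor_finsupp_mapRange_exact (ι : Type*) {f : M →ₗ[R] N} {g : N →ₗ[R] P}
    (h : Function.Exact (f.lTensor Y) (g.lTensor Y)) :
    Function.Exact ((Finsupp.mapRange.linearMap (α := ι) f).lTensor Y)
      ((Finsupp.mapRange.linearMap (α := ι) g).lTensor Y) := by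
  classical
  exact (Function.Exact.iff_of_ladder_linearEquiv
    (finsuppRight_comp_lTensor_mapRange Y ι f).symm
    (finsuppRight_comp_lTensor_mapRange Y ι g).symm).1 (finsupp_mapRange_exact ι h)

end Exactness

section Ext

variable {𝒜 : Type*} [Category* 𝒜] [Abelian 𝒜] [HasExt 𝒜] {S : ShortComplex 𝒜}

theorem subsingleton_ext_iff_of_shortExact (hS : S.ShortExact) (X : 𝒜) (n : ℕ)
    [Subsingleton (Ext S.X₂ X n)] [Subsingleton (Ext S.X₂ X (n + 1))] :
    Subsingleton (Ext S.X₁ X n) ↔ Subsingleton (Ext S.X₃ X (n + 1)) := by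
  constructor
  · intro _
    refine subsingleton_of_forall_eq 0 fun x => ?_
    obtain ⟨y, rfl⟩ := Ext.contravariant_sequence_exact₃ hS X x (Subsingleton.elim _ _)
      (add_comm 1 n)
    rw [Subsingleton.elim y 0, Ext.comp_zero]
  · intro _
    refine subsingleton_of_forall_eq 0 fun x => ?_
    obtain ⟨y, rfl⟩ := Ext.contravariant_sequence_exact₁ hS X x (add_comm 1 n)
      (Subsingleton.elim _ _)
    rw [Subsingleton.elim y 0, Ext.comp_zero]

theorem subsingleton_ext_one_iff_of_shortExact (hS : S.ShortExact) (X : 𝒜)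
    [Subsingleton (Ext S.X₂ X 1)] :
    Subsingleton (Ext S.X₃ X 1) ↔ ∀ φ : S.X₁ ⟶ X, ∃ ψ : S.X₂ ⟶ X, S.f ≫ ψ = φ := by
  constructor
  · intro _ φ
    obtain ⟨y, hy⟩ := Ext.contravariant_sequence_exact₁ hS X (Ext.mk₀ φ) (add_zero 1)
      (Subsingleton.elim _ _)
    obtain ⟨ψ, rfl⟩ := (Ext.mk₀_bijective _ _).surjective y
    rw [Ext.mk₀_comp_mk₀] at hy
    exact ⟨ψ, (Ext.mk₀_bijective _ _).injective hy⟩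
  · intro h
    refine subsingleton_of_forall_eq 0 fun x => ?_
    obtain ⟨y, rfl⟩ := Ext.contravariant_sequence_exact₃ hS X x (Subsingleton.elim _ _)
      (add_zero 1)
    obtain ⟨φ, rfl⟩ := (Ext.mk₀_bijective _ _).surjective y
    obtain ⟨ψ, rfl⟩ := h φ
    rw [← Ext.mk₀_comp_mk₀]
    exact hS.extClass_comp_assoc _

end Ext

namespace IsSES

variable {K L M : ModuleCat.{u} R} {f : K →ₗ[R] L} {g : L →ₗ[R] M}

theorem shortExact (h : IsSES f g) :
    (ModuleCat.shortComplexOfCompEqZero f g h.2.1.linearMap_comp_eq_zero).ShortExact :=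
  ModuleCat.shortComplex_shortExact _ h.2.1 h.1 h.2.2

theorem of_surjective {g : L →ₗ[R] M} (hg : Function.Surjective g) :
    IsSES (A := ModuleCat.of R (LinearMap.ker g)) (LinearMap.ker g).subtype g :=
  ⟨Subtype.val_injective, LinearMap.exact_subtype_ker_map g, hg⟩

theorem subsingleton_ext_one_iff_lTensor_injective (h : IsSES f g) (Y : ModuleCat.{u} R)
    [Subsingleton (Ext.{u} L (ModuleCat.of R (CharacterModule Y)) 1)] :
    Subsingleton (Ext.{u} M (ModuleCat.of R (CharacterModule Y)) 1) ↔
      Function.Injective (f.lTensor Y) := by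
  rw [LinearMap.lTensor_inj_iff_rTensor_inj, rTensor_injective_iff_lcomp_surjective]
  refine (subsingleton_ext_one_iff_of_shortExact h.shortExact _).trans
    ⟨fun lift φ => ?_, fun lift φ => ?_⟩
  · obtain ⟨ψ, hψ⟩ := lift (ModuleCat.ofHom φ)
    exact ⟨ψ.hom, congrArg ModuleCat.Hom.hom hψ⟩
  · obtain ⟨ψ, hψ⟩ := lift φ.hom
    exact ⟨ModuleCat.ofHom ψ, ModuleCat.hom_ext hψ⟩

end IsSES

/-- A projective resolution `⋯ → P₁ → P₀ → M → 0` given by linear maps, the form in which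
resolutions occur inside a `PGCFComplex`. -/
structure ProjRes (M : ModuleCat.{u} R) where
  P : ℕ → ModuleCat.{u} R
  projective : ∀ n, Module.Projective R (P n)
  d : ∀ n, P (n + 1) →ₗ[R] P n
  ε : P 0 →ₗ[R] M
  ε_surjective : Function.Surjective ε
  exact_zero : Function.Exact (d 0) ε
  exact_succ : ∀ n, Function.Exact (d (n + 1)) (d n)

namespace ProjRes

variable {M : ModuleCat.{u} R}

/-- The resolution of the first syzygy `ker ε` obtained by dropping `P₀`. -/
def syzygy (r : ProjRes M) : ProjRes (ModuleCat.of R (LinearMap.ker r.ε)) where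
  P n := r.P (n + 1)
  projective n := r.projective (n + 1)
  d n := r.d (n + 1)
  ε := (r.d 0).codRestrict (LinearMap.ker r.ε) r.exact_zero.apply_apply_eq_zero
  ε_surjective := by
    rintro ⟨x, hx⟩
    obtain ⟨y, rfl⟩ := (r.exact_zero x).1 hx
    exact ⟨y, rfl⟩
  exact_zero :=
    (LinearMap.ker r.ε).injective_subtype.comp_exact_iff_exact.1 (r.exact_succ 0)
  exact_succ n := r.exact_succ (n + 1)

/-- The resolution by linear maps underlying a categorical projective resolution. -/
noncomputable def ofProjectiveResolution (Q : ProjectiveResolution M) : ProjRes M where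
  P n := Q.complex.X n
  projective n := (IsProjective.iff_projective (R := R) _).2 (Q.projective n)
  d n := (Q.complex.d (n + 1) n).hom
  ε := (Q.π.f 0).hom
  ε_surjective := (ModuleCat.epi_iff_surjective (Q.π.f 0)).1 inferInstance
  exact_zero := (ShortComplex.ShortExact.moduleCat_exact_iff_function_exact _).1 Q.exact₀
  exact_succ n := (ShortComplex.ShortExact.moduleCat_exact_iff_function_exact _).1 (Q.exact_succ n)

/-- The direct sum of copies of a projective resolution. -/
noncomputable def finsupp (r : ProjRes M) (ι : Type u) : ProjRes (ModuleCat.of R (ι →₀ M)) where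
  P n := ModuleCat.of R (ι →₀ r.P n)
  projective n := by
    classical
    have := r.projective n
    exact Module.Projective.of_equiv (finsuppLEquivDirectSum R (r.P n) ι).symm
  d n := Finsupp.mapRange.linearMap (r.d n)
  ε := Finsupp.mapRange.linearMap r.ε
  ε_surjective := Finsupp.mapRange_surjective _ (map_zero _) r.ε_surjective
  exact_zero := finsupp_mapRange_exact ι r.exact_zero
  exact_succ n := finsupp_mapRange_exact ι (r.exact_succ n)

theorem subsingleton_ext_P_zero (r : ProjRes M) (X : ModuleCat.{u} R) (n : ℕ) :
    Subsingleton (Ext.{u} (r.P 0) X (n + 1)) :=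
  have : Projective (r.P 0) := (IsProjective.iff_projective (R := R) _).1 (r.projective 0)
  Ext.subsingleton_of_projective _ _ _

theorem subsingleton_ext_succ_iff (r : ProjRes M) (Y : ModuleCat.{u} R) (n : ℕ) :
    Subsingleton (Ext.{u} M (ModuleCat.of R (CharacterModule Y)) (n + 1)) ↔
      Function.Exact ((r.d (n + 1)).lTensor Y) ((r.d n).lTensor Y) := by
  induction n generalizing M with
  | zero =>
    have := r.subsingleton_ext_P_zero (ModuleCat.of R (CharacterModule Y)) 0
    exact ((IsSES.of_surjective r.ε_surjective).subsingleton_ext_one_iff_lTensor_injective Y).trans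
      (lTensor_injective_iff_exact_comp Y r.syzygy.exact_zero r.syzygy.ε_surjective _)
  | succ n ih =>
    have := r.subsingleton_ext_P_zero (ModuleCat.of R (CharacterModule Y)) n
    have := r.subsingleton_ext_P_zero (ModuleCat.of R (CharacterModule Y)) (n + 1)
    have shift := subsingleton_ext_iff_of_shortExact
      (IsSES.of_surjective r.ε_surjective).shortExact (ModuleCat.of R (CharacterModule Y)) (n + 1)
    exact shift.symm.trans (ih r.syzygy)

end ProjRes

theorem isZero_tor_succ_iff_exact {M : ModuleCat.{u} R} (Q : ProjectiveResolution M)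
    (Y : ModuleCat.{u} R) (n : ℕ) :
    IsZero (((Tor (ModuleCat.{u} R) (n + 1)).obj Y).obj M) ↔
      Function.Exact ((Q.complex.d (n + 2) (n + 1)).hom.lTensor Y)
        ((Q.complex.d (n + 1) n).hom.lTensor Y) := by
  refine (Q.isoLeftDerivedObj ((MonoidalCategory.tensoringLeft (ModuleCat.{u} R)).obj Y)
    (n + 1)).isZero_iff.trans ?_
  refine (HomologicalComplex.exactAt_iff_isZero_homology _ _).symm.trans ?_
  rw [HomologicalComplex.exactAt_iff' _ (n + 2) (n + 1) n (by simp) (by simp)]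
  exact ShortComplex.ShortExact.moduleCat_exact_iff_function_exact _

theorem isZero_tor_succ_iff_subsingleton_ext (Y M : ModuleCat.{u} R) (n : ℕ) :
    IsZero (((Tor (ModuleCat.{u} R) (n + 1)).obj Y).obj M) ↔
      Subsingleton (Ext.{u} M (ModuleCat.of R (CharacterModule Y)) (n + 1)) :=
  (isZero_tor_succ_iff_exact (ProjectiveResolution.of M) Y n).trans
    ((ProjRes.ofProjectiveResolution _).subsingleton_ext_succ_iff Y n).symm

/-- `Tor^R_i(Y, M) = 0` for all `i ≥ 1`. -/
def TorVanishing (Y M : ModuleCat.{u} R) : Prop :=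
  ∀ n : ℕ, IsZero (((Tor (ModuleCat.{u} R) (n + 1)).obj Y).obj M)

theorem ProjRes.torVanishing_iff {M : ModuleCat.{u} R} (r : ProjRes M) (Y : ModuleCat.{u} R) :
    TorVanishing Y M ↔
      ∀ n, Function.Exact ((r.d (n + 1)).lTensor Y) ((r.d n).lTensor Y) :=
  forall_congr' fun n =>
    (isZero_tor_succ_iff_subsingleton_ext Y M n).trans (r.subsingleton_ext_succ_iff Y n)

namespace IsSES

variable {K L M : ModuleCat.{u} R} {f : K →ₗ[R] L} {g : L →ₗ[R] M} {Y : ModuleCat.{u} R}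

theorem isZero_tor_one_iff (h : IsSES f g) (hL : TorVanishing Y L) :
    IsZero (((Tor (ModuleCat.{u} R) 1).obj Y).obj M) ↔ Function.Injective (f.lTensor Y) :=
  have := (isZero_tor_succ_iff_subsingleton_ext Y L 0).1 (hL 0)
  (isZero_tor_succ_iff_subsingleton_ext Y M 0).trans
    (h.subsingleton_ext_one_iff_lTensor_injective Y)

theorem isZero_tor_succ_iff (h : IsSES f g) (hL : TorVanishing Y L) (n : ℕ) :
    IsZero (((Tor (ModuleCat.{u} R) (n + 1)).obj Y).obj K) ↔
      IsZero (((Tor (ModuleCat.{u} R) (n + 2)).obj Y).obj M) := by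
  have := (isZero_tor_succ_iff_subsingleton_ext Y L n).1 (hL n)
  have := (isZero_tor_succ_iff_subsingleton_ext Y L (n + 1)).1 (hL (n + 1))
  rw [isZero_tor_succ_iff_subsingleton_ext, isZero_tor_succ_iff_subsingleton_ext]
  exact subsingleton_ext_iff_of_shortExact h.shortExact _ (n + 1)

theorem torVanishing_iff (h : IsSES f g) (hL : TorVanishing Y L) :
    TorVanishing Y M ↔ TorVanishing Y K ∧ Function.Injective (f.lTensor Y) := by
  rw [← h.isZero_tor_one_iff hL]
  exact ⟨fun hM => ⟨fun n => (h.isZero_tor_succ_iff hL n).2 (hM (n + 1)), hM 0⟩,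
    fun ⟨hK, hM⟩ n => n.casesOn hM fun n => (h.isZero_tor_succ_iff hL n).1 (hK n)⟩

end IsSES

namespace TorVanishing

variable {X Y M N : ModuleCat.{u} R}

theorem of_retract_left (h : TorVanishing Y M) (r : Retract X Y) : TorVanishing X M :=
  fun n => (h n).of_mono ((r.map (Tor _ (n + 1))).map ((evaluation _ _).obj M)).i

theorem of_retract_right (h : TorVanishing Y M) (r : Retract N M) : TorVanishing Y N :=
  fun n => (h n).of_mono (r.map ((Tor _ (n + 1)).obj Y)).i

theorem finsupp (h : TorVanishing Y M) (ι : Type u) :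
    TorVanishing Y (ModuleCat.of R (ι →₀ M)) := by
  let r := ProjRes.ofProjectiveResolution (ProjectiveResolution.of M)
  rw [r.torVanishing_iff] at h
  exact ((r.finsupp ι).torVanishing_iff Y).2 fun n => lTensor_finsupp_mapRange_exact Y ι (h n)

end TorVanishing

variable {C M A G : ModuleCat.{u} R}

theorem TorProdOrthogonal.torVanishing {Y : ModuleCat.{u} R} (hC : TorProdOrthogonal C)
    (hY : ProdClass (charM C) Y) (hA : AddClass C A) : TorVanishing Y A := by
  obtain ⟨I, s, p, hsp⟩ := hY
  obtain ⟨J, t, q, htq⟩ := hA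
  have hprod : TorVanishing (ModuleCat.of R (I → CharacterModule C)) C :=
    fun n => hC I (n + 1) n.succ_pos
  exact ((hprod.finsupp J).of_retract_right
    ⟨ModuleCat.ofHom t, ModuleCat.ofHom q, ModuleCat.hom_ext htq⟩).of_retract_left
      ⟨ModuleCat.ofHom s, ModuleCat.ofHom p, ModuleCat.hom_ext hsp⟩

/-- An `Add_R(C)`-coresolution `0 → M → A₀ → A₁ → ⋯` which stays exact after `Y ⊗_R -` for
`Y ∈ Prod_R(C⁺)`. -/
structure AddCoresolution (C M : ModuleCat.{u} R) where
  A : ℕ → ModuleCat.{u} R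
  memA : ∀ n, AddClass C (A n)
  η : M →ₗ[R] A 0
  d : ∀ n, A n →ₗ[R] A (n + 1)
  η_injective : Function.Injective η
  exact_zero : Function.Exact η (d 0)
  exact_succ : ∀ n, Function.Exact (d n) (d (n + 1))
  lTensor_injective : ∀ Y : ModuleCat.{u} R, ProdClass (charM C) Y →
    Function.Injective (η.lTensor Y)
  lTensor_exact_zero : ∀ Y : ModuleCat.{u} R, ProdClass (charM C) Y →
    Function.Exact (η.lTensor Y) ((d 0).lTensor Y)
  lTensor_exact_succ : ∀ Y : ModuleCat.{u} R, ProdClass (charM C) Y →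
    ∀ n, Function.Exact ((d n).lTensor Y) ((d (n + 1)).lTensor Y)

namespace AddCoresolution

/-- The coresolution `0 → M → A → A₀ → A₁ → ⋯` obtained by splicing a short exact sequence
`0 → M → A → G → 0` with a coresolution of `G`. -/
def splice (k : AddCoresolution C G) (hA : AddClass C A) {f : M →ₗ[R] A} {g : A →ₗ[R] G}
    (h : IsSES f g) (hf : ∀ Y : ModuleCat.{u} R, ProdClass (charM C) Y →
      Function.Injective (f.lTensor Y)) : AddCoresolution C M where
  A n := Nat.casesOn n A k.A
  memA
    | 0 => hA
    | n + 1 => k.memA n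
  η := f
  d
    | 0 => k.η ∘ₗ g
    | n + 1 => k.d n
  η_injective := h.1
  exact_zero := k.η_injective.comp_exact_iff_exact.2 h.2.1
  exact_succ
    | 0 => h.2.2.comp_exact_iff_exact.2 k.exact_zero
    | n + 1 => k.exact_succ n
  lTensor_injective := hf
  lTensor_exact_zero Y hY :=
    (lTensor_injective_iff_exact_comp Y h.2.1 h.2.2 k.η).1 (k.lTensor_injective Y hY)
  lTensor_exact_succ Y hY
    | 0 => (lTensor_comp_exact_iff_of_surjective Y h.2.2 k.η (k.d 0)).2 (k.lTensor_exact_zero Y hY)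
    | n + 1 => k.lTensor_exact_succ Y hY n

theorem isSES (k : AddCoresolution C M) :
    IsSES (C := ModuleCat.of R (LinearMap.range (k.d 0))) k.η (k.d 0).rangeRestrict :=
  ⟨k.η_injective,
    (LinearMap.range (k.d 0)).injective_subtype.comp_exact_iff_exact.1 k.exact_zero,
    (k.d 0).surjective_rangeRestrict⟩

/-- The coresolution of the first cosyzygy `M₁ = im (A₀ → A₁)` obtained by dropping `A₀`. -/
def cosyzygy (k : AddCoresolution C M) :
    AddCoresolution C (ModuleCat.of R (LinearMap.range (k.d 0))) where
  A n := k.A (n + 1)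
  memA n := k.memA (n + 1)
  η := (LinearMap.range (k.d 0)).subtype
  d n := k.d (n + 1)
  η_injective := Subtype.val_injective
  exact_zero := k.isSES.2.2.comp_exact_iff_exact.1 (k.exact_succ 0)
  exact_succ n := k.exact_succ (n + 1)
  lTensor_injective Y hY :=
    (lTensor_injective_iff_exact_comp Y k.isSES.2.1 k.isSES.2.2 _).2 (k.lTensor_exact_zero Y hY)
  lTensor_exact_zero Y hY :=
    (lTensor_comp_exact_iff_of_surjective Y k.isSES.2.2 _ _).1 (k.lTensor_exact_succ Y hY 0)
  lTensor_exact_succ Y hY n := k.lTensor_exact_succ Y hY (n + 1)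

end AddCoresolution

theorem nonempty_addCoresolution_iff :
    Nonempty (AddCoresolution C M) ↔
      ∃ (A G : ModuleCat.{u} R) (f : M →ₗ[R] A) (g : A →ₗ[R] G),
        AddClass C A ∧ Nonempty (AddCoresolution C G) ∧ IsSES f g ∧
          ∀ Y : ModuleCat.{u} R, ProdClass (charM C) Y → Function.Injective (f.lTensor Y) :=
  ⟨fun ⟨k⟩ => ⟨_, _, _, _, k.memA 0, ⟨k.cosyzygy⟩, k.isSES, k.lTensor_injective⟩,
    fun ⟨_, _, _, _, hA, ⟨k⟩, h, hf⟩ => ⟨k.splice hA h hf⟩⟩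

namespace PGCFComplex

/-- The complex `⋯ → P₁ → P₀ → A₀ → A₁ → ⋯` obtained by joining a projective resolution of `M`
and an `Add_R(C)`-coresolution of `M`. -/
def ofResolutions (r : ProjRes M) (k : AddCoresolution C M)
    (h : ∀ Y : ModuleCat.{u} R, ProdClass (charM C) Y → TorVanishing Y M) : PGCFComplex C where
  P := r.P
  A := k.A
  projP := r.projective
  memA := k.memA
  dP := r.d
  mid := k.η ∘ₗ r.ε
  dA := k.d
  exact_P := r.exact_succ
  exact_mid := k.η_injective.comp_exact_iff_exact.2 r.exact_zero
  exact_A0 := r.ε_surjective.comp_exact_iff_exact.2 k.exact_zero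
  exact_A := k.exact_succ
  tensor_exact Y hY :=
    ⟨(r.torVanishing_iff Y).1 (h Y hY),
      (lTensor_injective_iff_exact_comp Y r.exact_zero r.ε_surjective k.η).1
        (k.lTensor_injective Y hY),
      (lTensor_comp_exact_iff_of_surjective Y r.ε_surjective k.η (k.d 0)).2
        (k.lTensor_exact_zero Y hY),
      k.lTensor_exact_succ Y hY⟩

variable (X : PGCFComplex C) {p : X.P 0 →ₗ[R] M} {i : M →ₗ[R] X.A 0}

/-- The left half of the complex, as a projective resolution of the image of `P₀ → A₀`. -/
def projRes (hp : Function.Surjective p) (hi : Function.Injective i) (hip : i ∘ₗ p = X.mid) :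
    ProjRes M where
  P := X.P
  projective := X.projP
  d := X.dP
  ε := p
  ε_surjective := hp
  exact_zero := hi.comp_exact_iff_exact.1 (hip ▸ X.exact_mid)
  exact_succ := X.exact_P

/-- The right half of the complex, as a coresolution of the image of `P₀ → A₀`. -/
def addCoresolution (hp : Function.Surjective p) (hi : Function.Injective i)
    (hip : i ∘ₗ p = X.mid) : AddCoresolution C M where
  A := X.A
  memA := X.memA
  η := i
  d := X.dA
  η_injective := hi
  exact_zero := hp.comp_exact_iff_exact.1 (hip ▸ X.exact_A0)
  exact_succ := X.exact_A
  lTensor_injective Y hY :=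
    (lTensor_injective_iff_exact_comp Y (X.projRes hp hi hip).exact_zero hp i).2
      (hip ▸ (X.tensor_exact Y hY).2.1)
  lTensor_exact_zero Y hY :=
    (lTensor_comp_exact_iff_of_surjective Y hp i _).1 (hip ▸ (X.tensor_exact Y hY).2.2.1)
  lTensor_exact_succ Y hY := (X.tensor_exact Y hY).2.2.2

end PGCFComplex

theorem isPGCF_iff :
    IsPGCF C M ↔ (∀ Y : ModuleCat.{u} R, ProdClass (charM C) Y → TorVanishing Y M) ∧
      Nonempty (AddCoresolution C M) := by
  constructor
  · rintro ⟨X, hX⟩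
    obtain ⟨p, i, hp, hi, hip⟩ := (nonempty_linearEquiv_range_iff X.mid).1 hX
    exact ⟨fun Y hY => ((X.projRes hp hi hip).torVanishing_iff Y).2 (X.tensor_exact Y hY).1,
      ⟨X.addCoresolution hp hi hip⟩⟩
  · rintro ⟨h, ⟨k⟩⟩
    let r := ProjRes.ofProjectiveResolution (ProjectiveResolution.of M)
    exact ⟨PGCFComplex.ofResolutions r k h, (nonempty_linearEquiv_range_iff _).2
      ⟨r.ε, k.η, r.ε_surjective, k.η_injective, rfl⟩⟩

/-- If `C` is Tor-∏-orthogonal then `PG_CF(R)` is right `Add_R(C)`-periodic: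
`M ∈ PG_CF(R)` iff there is a short exact sequence `0 → M → A → G → 0` with `A ∈ Add_R(C)`
and `G ∈ PG_CF(R)`. -/
theorem statement9 (C : ModuleCat.{u} R) (hC : TorProdOrthogonal C) (M : ModuleCat.{u} R) :
    IsPGCF C M ↔ ∃ (A G : ModuleCat.{u} R) (f : M →ₗ[R] A) (g : A →ₗ[R] G),
      AddClass C A ∧ IsPGCF C G ∧ IsSES f g := by
  simp only [isPGCF_iff]
  constructor
  · rintro ⟨hM, hk⟩
    obtain ⟨A, G, f, g, hA, hG, hfg, hf⟩ := nonempty_addCoresolution_iff.1 hk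
    have hG_tor (Y : ModuleCat.{u} R) (hY : ProdClass (charM C) Y) : TorVanishing Y G :=
      (hfg.torVanishing_iff (hC.torVanishing hY hA)).2 ⟨hM Y hY, hf Y hY⟩
    exact ⟨A, G, f, g, hA, ⟨hG_tor, hG⟩, hfg⟩
  · rintro ⟨A, G, f, g, hA, ⟨hG_tor, hG⟩, hfg⟩
    have hMf (Y : ModuleCat.{u} R) (hY : ProdClass (charM C) Y) :
        TorVanishing Y M ∧ Function.Injective (f.lTensor Y) :=
      (hfg.torVanishing_iff (hC.torVanishing hY hA)).1 (hG_tor Y hY)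
    exact ⟨fun Y hY => (hMf Y hY).1, nonempty_addCoresolution_iff.2
      ⟨A, G, f, g, hA, hG, hfg, fun Y hY => (hMf Y hY).2⟩⟩
end

section
/- Let M be a projectively coresolved G_C-flat left R-module. Then M is a direct summand of a module N for which there exists a (Prod_R(C⁺) ⊗_R -)-exact short exact sequence 0 → N → P ⊕ X → N → 0 with P projective and X ∈ Add_R(C). -/
open CategoryTheory CategoryTheory.Limits

set_option autoImplicit false

universe u

variable {R : Type u} [CommRing R]

/-!
Write `D` for the differential on the direct sum of all terms of the complex. Exactness of the
complex, and of the complex after `Y ⊗ -`, says that `ker D = range D` and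
`ker (Y ⊗ D) = range (Y ⊗ D)`. Thus `N = range D` sits in `0 → N → ⨁ Pᵢ ⊕ ⨁ Aⱼ → N → 0`, and this
sequence stays exact after `Y ⊗ -`: only injectivity on the left is in question, and an element of
`Y ⊗ N` killed in `Y ⊗ (⨁ Pᵢ ⊕ ⨁ Aⱼ)` lifts to an element of the kernel, hence of the range, of
`Y ⊗ D`, which `Y ⊗ (⨁ Pᵢ ⊕ ⨁ Aⱼ) → Y ⊗ N` annihilates. Finally `D` is homogeneous, so each
`range dᵢ`, in particular `M`, is a direct summand of `N`.
-/

open DirectSum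

universe v

section ShiftDifferential

variable {S ι : Type*} {E : ι → Type*} {π : Equiv.Perm ι}

section Semiring

variable [Semiring S] [∀ i, AddCommMonoid (E i)] [∀ i, Module S (E i)]

/-- The endomorphism of `⨁ i, E i` assembled from maps `d i : E (π i) → E i`, where `π` is a
permutation of the index set. For a complex, `d` is its family of differentials, each indexed by
its target, and `π` sends an index to the preceding one. -/
def shiftDifferential (d : ∀ i, E (π i) →ₗ[S] E i) : (⨁ i, E i) →ₗ[S] ⨁ i, E i :=
  lmap d ∘ₗ (lequivCongrLeft S π.symm).toLinearMap

variable (d : ∀ i, E (π i) →ₗ[S] E i)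

@[simp]
theorem shiftDifferential_apply (x : ⨁ i, E i) (i : ι) :
    shiftDifferential d x i = d i (x (π i)) :=
  rfl

theorem mem_range_shiftDifferential {y : ⨁ i, E i} :
    y ∈ LinearMap.range (shiftDifferential d) ↔ ∀ i, y i ∈ LinearMap.range (d i) := by
  rw [shiftDifferential, LinearMap.range_comp_of_range_eq_top _ (LinearEquiv.range _), range_lmap]
  simp only [Submodule.mem_comap, Submodule.mem_pi, Set.mem_univ, true_imp_iff,
    coeFnLinearMap_apply]

theorem shiftDifferential_exact (hd : ∀ i, Function.Exact (d (π i)) (d i)) :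
    Function.Exact (shiftDifferential d) (shiftDifferential d) := fun y =>
  calc shiftDifferential d y = 0
    _ ↔ ∀ i, d i (y (π i)) = 0 := DFinsupp.ext_iff
    _ ↔ ∀ i, y (π i) ∈ LinearMap.range (d (π i)) := forall_congr' fun i => hd i _
    _ ↔ ∀ i, y i ∈ LinearMap.range (d i) :=
      π.forall_congr_right (q := fun i => y i ∈ LinearMap.range (d i))
    _ ↔ y ∈ Set.range (shiftDifferential d) := (mem_range_shiftDifferential d).symm

theorem exists_retraction_range_shiftDifferential (i : ι) :
    ∃ (s : LinearMap.range (d i) →ₗ[S] LinearMap.range (shiftDifferential d))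
      (p : LinearMap.range (shiftDifferential d) →ₗ[S] LinearMap.range (d i)),
      p ∘ₗ s = LinearMap.id := by
  classical
  have lof_mem : ∀ x ∈ LinearMap.range (d i),
      lof S ι E i x ∈ LinearMap.range (shiftDifferential d) := by
    intro x hx
    rw [mem_range_shiftDifferential]
    intro j
    obtain rfl | hij := eq_or_ne i j
    · simpa only [lof_apply] using hx
    · simp [lof_eq_of, of_eq_of_ne _ _ _ hij.symm]
  have component_mem : ∀ y ∈ LinearMap.range (shiftDifferential d),
      component S ι E i y ∈ LinearMap.range (d i) :=
    fun y hy => (mem_range_shiftDifferential d).1 hy i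
  exact ⟨(lof S ι E i).restrict lof_mem, (component S ι E i).restrict component_mem,
    LinearMap.ext fun x => Subtype.ext (component.lof_self S i x.1)⟩

end Semiring

section Tensor

variable [CommSemiring S] [∀ i, AddCommMonoid (E i)] [∀ i, Module S (E i)]
variable (d : ∀ i, E (π i) →ₗ[S] E i) (Y : Type*) [AddCommMonoid Y] [Module S Y]

theorem directSumRight_comp_lTensor_shiftDifferential [DecidableEq ι] :
    (TensorProduct.directSumRight S S Y E).toLinearMap ∘ₗ (shiftDifferential d).lTensor Y =
      shiftDifferential (fun i => (d i).lTensor Y) ∘ₗ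
        (TensorProduct.directSumRight S S Y E).toLinearMap := by
  refine TensorProduct.ext' fun y x => DFinsupp.ext fun i => ?_
  simp [TensorProduct.directSumRight_tmul]

theorem lTensor_shiftDifferential_exact
    (hd : ∀ i, Function.Exact ((d (π i)).lTensor Y) ((d i).lTensor Y)) :
    Function.Exact ((shiftDifferential d).lTensor Y) ((shiftDifferential d).lTensor Y) := by
  classical
  have comm := (directSumRight_comp_lTensor_shiftDifferential d Y).symm
  exact (Function.Exact.iff_of_ladder_linearEquiv comm comm).1 (shiftDifferential_exact _ hd)

end Tensor

end ShiftDifferential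

theorem lTensor_subtype_range_injective {S A B L : Type*} [CommRing S] [AddCommMonoid A]
    [AddCommMonoid B] [AddCommGroup L] [Module S A] [Module S B] [Module S L]
    {f : A →ₗ[S] B} {g : B →ₗ[S] L} (hgf : g ∘ₗ f = 0) (Y : Type*) [AddCommGroup Y]
    [Module S Y] (hY : Function.Exact (f.lTensor Y) (g.lTensor Y)) :
    Function.Injective ((LinearMap.range g).subtype.lTensor Y) := by
  have rangeRestrict_comp : g.rangeRestrict ∘ₗ f = 0 :=
    LinearMap.ext fun a => Subtype.ext (LinearMap.congr_fun hgf a)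
  refine (injective_iff_map_eq_zero ((LinearMap.range g).subtype.lTensor Y)).2 fun n hn => ?_
  obtain ⟨b, rfl⟩ := LinearMap.lTensor_surjective Y g.surjective_rangeRestrict n
  have hb : g.lTensor Y b = 0 := by rwa [← LinearMap.lTensor_comp_apply] at hn
  obtain ⟨a, rfl⟩ := (hY b).1 hb
  rw [← LinearMap.lTensor_comp_apply, rangeRestrict_comp, LinearMap.lTensor_zero,
    LinearMap.zero_apply]

/-- A direct sum indexed by a disjoint union is the product of the two partial direct sums. -/
def directSumSumEquivProd {S ι κ : Type*} [Semiring S] [DecidableEq ι] [DecidableEq κ]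
    (E : ι ⊕ κ → Type*) [∀ i, AddCommMonoid (E i)] [∀ i, Module S (E i)] :
    (⨁ i, E i) ≃ₗ[S] (⨁ i, E (Sum.inl i)) × ⨁ k, E (Sum.inr k) :=
  LinearEquiv.ofLinearMap
    (toModule S _ _ fun
      | Sum.inl i => LinearMap.inl S _ _ ∘ₗ lof S ι (fun i => E (Sum.inl i)) i
      | Sum.inr k => LinearMap.inr S _ _ ∘ₗ lof S κ (fun k => E (Sum.inr k)) k)
    (LinearMap.coprod
      (toModule S _ _ fun i => lof S _ E (Sum.inl i))
      (toModule S _ _ fun k => lof S _ E (Sum.inr k)))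
    (by ext <;> simp)
    (by ext (i | k) <;> simp)

theorem AddClass.directSum {S : Type (max u v)} [CommRing S] {ι : Type v}
    {C : ModuleCat.{max u v} S} {A : ι → ModuleCat.{max u v} S} (hA : ∀ i, AddClass C (A i)) :
    AddClass C (ModuleCat.of S (⨁ i, A i)) := by
  classical
  choose κ s p hps using hA
  let e : ((Σ i, κ i) →₀ C) ≃ₗ[S] ⨁ i, (κ i →₀ C) := sigmaFinsuppLequivDFinsupp S
  refine ⟨Σ i, κ i, e.symm.toLinearMap ∘ₗ lmap s, lmap p ∘ₗ e.toLinearMap, ?_⟩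
  calc (lmap p ∘ₗ e.toLinearMap) ∘ₗ e.symm.toLinearMap ∘ₗ lmap s
    _ = lmap p ∘ₗ lmap s := by ext; simp
    _ = lmap fun i => p i ∘ₗ s i := (lmap_comp s p).symm
    _ = LinearMap.id := by simp only [hps, lmap_id]

namespace PGCFComplex

/-- The step to the preceding index of `⋯ → P₁ → P₀ → A₀ → A₁ → ⋯`, where `Pₙ` is indexed by
`Sum.inl n` and `Aₙ` by `Sum.inr n`. -/
def prevIndex : Equiv.Perm (ℕ ⊕ ℕ) where
  toFun
    | Sum.inl n => Sum.inl (n + 1)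
    | Sum.inr 0 => Sum.inl 0
    | Sum.inr (n + 1) => Sum.inr n
  invFun
    | Sum.inl 0 => Sum.inr 0
    | Sum.inl (n + 1) => Sum.inl n
    | Sum.inr n => Sum.inr (n + 1)
  left_inv := by rintro (n | _ | n) <;> rfl
  right_inv := by rintro ((_ | n) | n) <;> rfl

variable {C : ModuleCat.{u} R} (X : PGCFComplex C)

/-- The terms of the complex as a single family. -/
def term : ℕ ⊕ ℕ → ModuleCat.{u} R :=
  Sum.elim X.P X.A

/-- The differentials of the complex as a single family, each indexed by its target. -/
def differential : ∀ i, X.term (prevIndex i) →ₗ[R] X.term i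
  | Sum.inl n => X.dP n
  | Sum.inr 0 => X.mid
  | Sum.inr (n + 1) => X.dA n

theorem differential_exact :
    ∀ i, Function.Exact (X.differential (prevIndex i)) (X.differential i)
  | Sum.inl n => X.exact_P n
  | Sum.inr 0 => X.exact_mid
  | Sum.inr 1 => X.exact_A0
  | Sum.inr (n + 2) => X.exact_A n

theorem lTensor_differential_exact {Y : ModuleCat.{u} R} (hY : ProdClass (charM C) Y) :
    ∀ i, Function.Exact ((X.differential (prevIndex i)).lTensor Y)
      ((X.differential i).lTensor Y) :=
  have ⟨exact_P, exact_mid, exact_A0, exact_A⟩ := X.tensor_exact Y hY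
  fun
  | Sum.inl n => exact_P n
  | Sum.inr 0 => exact_mid
  | Sum.inr 1 => exact_A0
  | Sum.inr (n + 2) => exact_A n

/-- The differential on the direct sum of all terms of the complex, that is, on the common term
of the direct sum of all its shifts. -/
def totalDifferential : (⨁ i, X.term i) →ₗ[R] ⨁ i, X.term i :=
  shiftDifferential (E := fun i => X.term i) X.differential

theorem totalDifferential_exact : Function.Exact X.totalDifferential X.totalDifferential :=
  shiftDifferential_exact _ X.differential_exact

theorem lTensor_totalDifferential_exact {Y : ModuleCat.{u} R} (hY : ProdClass (charM C) Y) :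
    Function.Exact (X.totalDifferential.lTensor Y) (X.totalDifferential.lTensor Y) :=
  lTensor_shiftDifferential_exact _ Y (X.lTensor_differential_exact hY)

theorem exists_retraction_range_totalDifferential :
    ∃ (s : LinearMap.range X.mid →ₗ[R] LinearMap.range X.totalDifferential)
      (p : LinearMap.range X.totalDifferential →ₗ[R] LinearMap.range X.mid),
      p ∘ₗ s = LinearMap.id :=
  exists_retraction_range_shiftDifferential (E := fun i => X.term i) X.differential (Sum.inr 0)

/-- The direct sum of all terms of the complex, split into its projective part and its part in
`Add_R(C)`. -/
def totalEquiv : (⨁ i, X.term i) ≃ₗ[R] (⨁ n, X.P n) × ⨁ n, X.A n :=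
  directSumSumEquivProd fun i => X.term i

end PGCFComplex

/-- Every `PG_CF` module `M` is a direct summand of a module `N` fitting in
a `(Prod_R(C⁺) ⊗_R -)`-exact short exact sequence `0 → N → P ⊕ X → N → 0` with `P`
projective and `X ∈ Add_R(C)`. -/
theorem statement11 (C M : ModuleCat.{u} R) (hM : IsPGCF C M) :
    ∃ (N : ModuleCat.{u} R) (s : M →ₗ[R] N) (p : N →ₗ[R] M),
      p ∘ₗ s = LinearMap.id ∧
      ∃ (P X : ModuleCat.{u} R)
        (f : N →ₗ[R] ModuleCat.of R (P × X)) (g : ModuleCat.of R (P × X) →ₗ[R] N),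
        Module.Projective R P ∧ AddClass C X ∧
        IsSES (B := ModuleCat.of R (P × X)) f g ∧
        ∀ Y : ModuleCat.{u} R, ProdClass (charM C) Y →
          Function.Injective (LinearMap.lTensor Y f) ∧
          Function.Exact (LinearMap.lTensor Y f) (LinearMap.lTensor Y g) ∧
          Function.Surjective (LinearMap.lTensor Y g) := by
  obtain ⟨X, ⟨φ⟩⟩ := hM
  obtain ⟨s, p, hps⟩ := X.exists_retraction_range_totalDifferential
  let D := X.totalDifferential
  have hD : Function.Exact D D := X.totalDifferential_exact
  let f := X.totalEquiv.toLinearMap ∘ₗ (LinearMap.range D).subtype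
  let g := D.rangeRestrict ∘ₗ X.totalEquiv.symm.toLinearMap
  have hf : Function.Injective f := X.totalEquiv.injective.comp (Submodule.subtype_injective _)
  have hg : Function.Surjective g := D.surjective_rangeRestrict.comp X.totalEquiv.symm.surjective
  have hfg : Function.Exact f g :=
    (LinearEquiv.conj_exact_iff_exact _ _ X.totalEquiv).2 hD.linearMap_rangeRestrict
  have lTensor_f_injective (Y : ModuleCat.{u} R) (hY : ProdClass (charM C) Y) :
      Function.Injective (f.lTensor Y) := by
    rw [LinearMap.lTensor_comp]
    exact (X.totalEquiv.lTensor Y).injective.comp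
      (lTensor_subtype_range_injective hD.linearMap_comp_eq_zero Y
        (X.lTensor_totalDifferential_exact hY))
  refine ⟨ModuleCat.of R (LinearMap.range D), s ∘ₗ φ.toLinearMap, φ.symm.toLinearMap ∘ₗ p, ?_,
    ModuleCat.of R (⨁ n, X.P n), ModuleCat.of R (⨁ n, X.A n), f, g,
    Module.Projective.directSum_iff.2 X.projP, AddClass.directSum.{u, 0} X.memA, ⟨hf, hfg, hg⟩,
    fun Y hY => ⟨lTensor_f_injective Y hY, lTensor_exact Y hfg hg,
      LinearMap.lTensor_surjective Y hg⟩⟩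
  ext x
  simp [← LinearMap.comp_apply p s, hps]
end

section
/- Let C be a Tor-∏-orthogonal pure projective left R-module, and suppose the class PG_CF(R) of projectively coresolved G_C-flat modules satisfies PG_CF(R) ⊆ ^⊥⟨C⟩ (i.e., Ext^{i≥1}_R(M, A) = 0 for all M ∈ PG_CF(R) and A ∈ ⟨C⟩) and is projectively resolving. Then every G_C-projective module of finite PG_CF dimension is PG_CF; more precisely, if M is a module with PG_CF-pd(M) < ∞, then G_C-pd(M) = PG_CF-pd(M). -/
open CategoryTheory CategoryTheory.Limits

set_option autoImplicit false

universe u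

variable {R : Type u} [CommRing R]

/-- `M` has an `𝒳`-resolution of length at most `n`. -/
def ResDimLE (𝒳 : ModuleCat.{u} R → Prop) : ℕ → ModuleCat.{u} R → Prop
  | 0, M => 𝒳 M
  | (n + 1), M => ∃ (A : ModuleCat.{u} R) (g : A →ₗ[R] M),
      𝒳 A ∧ Function.Surjective g ∧ ResDimLE 𝒳 n (ModuleCat.of R (LinearMap.ker g))

/-- Vanishing of `Ext^n_R(A, B)` (computed in the abelian category of `R`-modules). -/
def extZero (n : ℕ) (A B : ModuleCat.{u} R) : Prop :=
  Limits.IsZero (((Ext ℤ (ModuleCat.{u} R) n).obj (Opposite.op A)).obj B)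

/-- A class of modules is definable if it is closed under direct products, (filtered)
direct limits, and pure submodules. -/
def Definable (D : ModuleCat.{u} R → Prop) : Prop :=
  (∀ (ι : Type u) (f : ι → ModuleCat.{u} R), (∀ i, D (f i)) →
    D (ModuleCat.of R (∀ i, f i))) ∧
  (∀ (J : Type u) [SmallCategory J] [IsFiltered J] (F : J ⥤ ModuleCat.{u} R),
    (∀ j, D (F.obj j)) → D (Limits.colimit F)) ∧
  (∀ (A B : ModuleCat.{u} R) (e : A →ₗ[R] B), Function.Injective e →
    (∀ (K : Type u) [AddCommGroup K] [Module R K],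
      Function.Injective (LinearMap.lTensor K e)) → D B → D A)

/-- The definable closure of a class of modules. -/
def defClosure (𝒳 : ModuleCat.{u} R → Prop) : ModuleCat.{u} R → Prop :=
  fun M => ∀ D : ModuleCat.{u} R → Prop, Definable D → (∀ N, 𝒳 N → D N) → D M

/-- A totally acyclic complex `⋯ → P₁ → P₀ → A₀ → A₁ → ⋯` with the `Pᵢ` projective and the
`Aⱼ` in `Add_R(C)`, which stays exact after applying `Hom_R(-, W)` for `W ∈ Add_R(C)`.
Modules isomorphic to the image of the middle map are the `G_C`-projective modules. -/
structure GCComplex (C : ModuleCat.{u} R) where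
  P : ℕ → ModuleCat.{u} R
  A : ℕ → ModuleCat.{u} R
  projP : ∀ n, Module.Projective R (P n)
  memA : ∀ n, AddClass C (A n)
  dP : ∀ n, P (n + 1) →ₗ[R] P n
  mid : P 0 →ₗ[R] A 0
  dA : ∀ n, A n →ₗ[R] A (n + 1)
  exact_P : ∀ n, Function.Exact (dP (n + 1)) (dP n)
  exact_mid : Function.Exact (dP 0) mid
  exact_A0 : Function.Exact mid (dA 0)
  exact_A : ∀ n, Function.Exact (dA n) (dA (n + 1))
  hom_exact : ∀ W : ModuleCat.{u} R, AddClass C W →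
    (∀ n, Function.Exact (fun ψ : A (n + 2) →ₗ[R] W => ψ ∘ₗ dA (n + 1))
      (fun ψ : A (n + 1) →ₗ[R] W => ψ ∘ₗ dA n)) ∧
    Function.Exact (fun ψ : A 1 →ₗ[R] W => ψ ∘ₗ dA 0)
      (fun ψ : A 0 →ₗ[R] W => ψ ∘ₗ mid) ∧
    Function.Exact (fun ψ : A 0 →ₗ[R] W => ψ ∘ₗ mid)
      (fun ψ : P 0 →ₗ[R] W => ψ ∘ₗ dP 0) ∧
    ∀ n, Function.Exact (fun ψ : P n →ₗ[R] W => ψ ∘ₗ dP n)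
      (fun ψ : P (n + 1) →ₗ[R] W => ψ ∘ₗ dP (n + 1))

/-- `M` is `G_C`-projective. -/
def IsGCP (C M : ModuleCat.{u} R) : Prop :=
  ∃ X : GCComplex C, Nonempty (M ≃ₗ[R] ↥(LinearMap.range X.mid))

/-- `C` is pure projective: it lifts along every pure epimorphism. -/
def PureProjective (C : ModuleCat.{u} R) : Prop :=
  ∀ (A B : ModuleCat.{u} R) (g : A →ₗ[R] B), Function.Surjective g →
    (∀ (K : Type u) [AddCommGroup K] [Module R K],
      Function.Injective (LinearMap.lTensor K (LinearMap.ker g).subtype)) →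
    ∀ h : C →ₗ[R] B, ∃ l : C →ₗ[R] A, g ∘ₗ l = h

/-!
Applying `Hom(-, W)` to the projective half of a complex defining a `G_C`-projective module shows
`Ext^i(K, W) = 0` for `K` `G_C`-projective, `W ∈ Add_R(C)` and `i ≥ 1`. By dimension shifting, this
extends to all `W` of finite `Add_R(C)`-resolution dimension, and gives `Ext^i(M, W) = 0` for all
`i > n` when `G_C-pd(M) ≤ n`. If `PG_CF-pd(M)` is finite, syzygies reduce the bound
`PG_CF-pd(M) ≤ n` to the case `n = 0`. There the approximation `0 → X → G → M → 0` splits, since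
`Ext^1(M, X) = 0`, so `M` is a direct summand of a `PG_CF` module `G`. The class `PG_CF(R)` is
closed under direct summands: by the Eilenberg swindle `G^(κ) ≃ M × G^(κ)`, so `M` is the kernel
of an epimorphism `G^(κ) → G^(κ)` between `PG_CF` modules.
-/

section FinsuppModules

variable {S : Type*} [Semiring S] {κ : Type*} {L M N : Type*}
  [AddCommMonoid L] [Module S L] [AddCommMonoid M] [Module S M] [AddCommMonoid N] [Module S N]

theorem exact_finsupp_mapRange {f : L →ₗ[S] M} {g : M →ₗ[S] N} (h : Function.Exact f g) :
    Function.Exact (Finsupp.mapRange.linearMap (α := κ) f)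
      (Finsupp.mapRange.linearMap (α := κ) g) := by
  refine fun y ↦ ⟨fun hy ↦ ?_, ?_⟩
  · suffices y ∈ LinearMap.range (Finsupp.mapRange.linearMap (α := κ) f) from this
    rw [← y.sum_single]
    refine Submodule.sum_mem _ fun k _ ↦ ?_
    obtain ⟨a, ha⟩ := (h (y k)).1 (DFunLike.congr_fun hy k)
    exact ⟨Finsupp.single k a, by simp [ha]⟩
  · rintro ⟨x, rfl⟩
    ext k
    simpa using h.apply_apply_eq_zero (x k)

variable (S κ M N) in
/-- Copowers commute with binary products. -/
noncomputable def finsuppProdLEquiv : (κ →₀ M × N) ≃ₗ[S] (κ →₀ M) × (κ →₀ N) :=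
  LinearEquiv.ofLinearMap
    ((Finsupp.mapRange.linearMap (LinearMap.fst S M N)).prod
      (Finsupp.mapRange.linearMap (LinearMap.snd S M N)))
    ((Finsupp.mapRange.linearMap (LinearMap.inl S M N)).coprod
      (Finsupp.mapRange.linearMap (LinearMap.inr S M N)))
    (by ext <;> simp) (by ext <;> simp)

variable (S κ M) in
theorem nonempty_finsupp_linearEquiv_prod [Infinite κ] :
    Nonempty ((κ →₀ M) ≃ₗ[S] M × (κ →₀ M)) := by
  obtain ⟨e⟩ : Nonempty (κ ≃ Unit ⊕ κ) := Cardinal.eq.1 <| by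
    simp [add_comm (1 : Cardinal), Cardinal.add_one_eq (Cardinal.aleph0_le_mk κ)]
  exact ⟨Finsupp.domLCongr e ≪≫ₗ Finsupp.sumFinsuppLEquivProdFinsupp S ≪≫ₗ
    (Finsupp.uniqueLinearEquiv S M ()).prodCongr (.refl S _)⟩

end FinsuppModules

section Swindle

variable {S : Type*} [Ring S] {κ : Type*} {G M : Type*}
  [AddCommGroup G] [Module S G] [AddCommGroup M] [Module S M]

-- Eilenberg swindle: if `G ≃ M × K`, then `G^(κ) ≃ M^(κ) × K^(κ) ≃ M × M^(κ) × K^(κ) ≃ M × G^(κ)`.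
theorem nonempty_finsupp_linearEquiv_prod_of_retract [Infinite κ] {s : M →ₗ[S] G} {g : G →ₗ[S] M}
    (hs : g ∘ₗ s = LinearMap.id) : Nonempty ((κ →₀ G) ≃ₗ[S] M × (κ →₀ G)) := by
  let split : G ≃ₗ[S] M × LinearMap.ker g :=
    ((LinearMap.exact_subtype_ker_map g).splitSurjectiveEquiv
      (Submodule.subtype_injective _) ⟨s, hs⟩).1 ≪≫ₗ LinearEquiv.prodComm S _ _
  let splitCopower : (κ →₀ G) ≃ₗ[S] (κ →₀ M) × (κ →₀ LinearMap.ker g) :=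
    Finsupp.mapRange.linearEquiv split ≪≫ₗ finsuppProdLEquiv S κ M _
  obtain ⟨shift⟩ := nonempty_finsupp_linearEquiv_prod S κ M
  exact ⟨splitCopower ≪≫ₗ shift.prodCongr (.refl S _) ≪≫ₗ LinearEquiv.prodAssoc S M _ _ ≪≫ₗ
    (LinearEquiv.refl S M).prodCongr splitCopower.symm⟩

variable (κ) in
/-- Passing to the range of a linear map commutes with copowers. -/
noncomputable def finsuppRangeLEquiv (f : M →ₗ[S] G) :
    (κ →₀ LinearMap.range f) ≃ₗ[S] LinearMap.range (Finsupp.mapRange.linearMap (α := κ) f) :=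
  LinearEquiv.ofInjective (Finsupp.mapRange.linearMap (LinearMap.range f).subtype)
      (Finsupp.mapRange_injective _ (map_zero _) (Submodule.subtype_injective _)) ≪≫ₗ
    LinearEquiv.ofEq _ _ (by
      have range_mapRange_rangeRestrict : LinearMap.range
          (Finsupp.mapRange.linearMap (α := κ) f.rangeRestrict) = ⊤ :=
        LinearMap.range_eq_top.2
          (Finsupp.mapRange_surjective _ (map_zero _) f.surjective_rangeRestrict)
      rw [← LinearMap.range_comp_of_range_eq_top _ range_mapRange_rangeRestrict,
        ← Finsupp.mapRange.linearMap_comp]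
      rfl)

end Swindle

section TensorCopower

open TensorProduct

variable {S : Type*} [CommSemiring S] {κ : Type*} {L M N Y : Type*} [AddCommMonoid L] [Module S L]
  [AddCommMonoid M] [Module S M] [AddCommMonoid N] [Module S N] [AddCommMonoid Y] [Module S Y]

theorem finsuppRight_comp_lTensor_mapRange_s16 [DecidableEq κ] (f : L →ₗ[S] M) :
    (finsuppRight S S Y M κ).toLinearMap ∘ₗ
        LinearMap.lTensor Y (Finsupp.mapRange.linearMap (α := κ) f) =
      Finsupp.mapRange.linearMap (LinearMap.lTensor Y f) ∘ₗ
        (finsuppRight S S Y L κ).toLinearMap := by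
  refine TensorProduct.ext' fun y p ↦ ?_
  ext k
  simp

theorem exact_lTensor_finsupp_mapRange {f : L →ₗ[S] M} {g : M →ₗ[S] N}
    (h : Function.Exact (LinearMap.lTensor Y f) (LinearMap.lTensor Y g)) :
    Function.Exact (LinearMap.lTensor Y (Finsupp.mapRange.linearMap (α := κ) f))
      (LinearMap.lTensor Y (Finsupp.mapRange.linearMap (α := κ) g)) := by
  classical
  exact (Function.Exact.iff_of_ladder_linearEquiv (finsuppRight_comp_lTensor_mapRange_s16 f).symm
    (finsuppRight_comp_lTensor_mapRange_s16 g).symm).1 (exact_finsupp_mapRange h)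

end TensorCopower

section ExtVanishing

open Abelian

universe w

variable {𝒜 : Type*} [Category* 𝒜] [Abelian 𝒜] [HasExt.{w} 𝒜] {S : ShortComplex 𝒜}

theorem exists_section_of_subsingleton_ext_one (hS : S.ShortExact)
    [Subsingleton (Ext.{w} S.X₃ S.X₁ 1)] : ∃ s : S.X₃ ⟶ S.X₂, s ≫ S.g = 𝟙 S.X₃ := by
  obtain ⟨x, hx⟩ := Ext.covariant_sequence_exact₃ S.X₃ hS (Ext.mk₀ (𝟙 S.X₃)) (zero_add 1)
    (Subsingleton.elim _ _)
  obtain ⟨s, rfl⟩ := (Ext.mk₀_bijective _ _).2 x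
  rw [Ext.mk₀_comp_mk₀] at hx
  exact ⟨s, (Ext.mk₀_bijective _ _).1 hx⟩

theorem subsingleton_ext_X₁ (hS : S.ShortExact) {W : 𝒜} {i : ℕ}
    [Subsingleton (Ext.{w} S.X₂ W i)] [Subsingleton (Ext.{w} S.X₃ W (1 + i))] :
    Subsingleton (Ext.{w} S.X₁ W i) := by
  refine subsingleton_of_forall_eq 0 fun x ↦ ?_
  obtain ⟨y, rfl⟩ := Ext.contravariant_sequence_exact₁ hS W x rfl (Subsingleton.elim _ _)
  rw [Subsingleton.elim y 0, Ext.comp_zero]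

theorem subsingleton_ext_X₃ (hS : S.ShortExact) {W : 𝒜} {i : ℕ}
    [Subsingleton (Ext.{w} S.X₁ W i)] [Subsingleton (Ext.{w} S.X₂ W (1 + i))] :
    Subsingleton (Ext.{w} S.X₃ W (1 + i)) := by
  refine subsingleton_of_forall_eq 0 fun x ↦ ?_
  obtain ⟨y, rfl⟩ := Ext.contravariant_sequence_exact₃ hS W x (Subsingleton.elim _ _) rfl
  rw [Subsingleton.elim y 0, Ext.comp_zero]

theorem subsingleton_ext_to_X₃ (hS : S.ShortExact) {M : 𝒜} {i : ℕ}
    [Subsingleton (Ext.{w} M S.X₁ (i + 1))] [Subsingleton (Ext.{w} M S.X₂ i)] :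
    Subsingleton (Ext.{w} M S.X₃ i) := by
  refine subsingleton_of_forall_eq 0 fun x ↦ ?_
  obtain ⟨y, rfl⟩ := Ext.covariant_sequence_exact₃ M hS x rfl (Subsingleton.elim _ _)
  rw [Subsingleton.elim y 0, Ext.zero_comp]

theorem subsingleton_ext_one_of_forall_extends (hS : S.ShortExact) [Projective S.X₂] {W : 𝒜}
    (extends_to_X₂ : ∀ φ : S.X₁ ⟶ W, ∃ ψ : S.X₂ ⟶ W, S.f ≫ ψ = φ) :
    Subsingleton (Ext.{w} S.X₃ W 1) := by
  refine subsingleton_of_forall_eq 0 fun x ↦ ?_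
  obtain ⟨y, rfl⟩ := Ext.contravariant_sequence_exact₃ hS W x
    (Ext.eq_zero_of_projective (n := 0) _) (add_zero 1)
  obtain ⟨φ, rfl⟩ := (Ext.mk₀_bijective _ _).2 y
  obtain ⟨ψ, rfl⟩ := extends_to_X₂ φ
  rw [← Ext.mk₀_comp_mk₀, hS.extClass_comp_assoc]

/-- `Ext^i(M, W) = 0` for all `W` in the class `𝒲` and all `i > n`. -/
def ExtVanishesAbove (𝒲 : 𝒜 → Prop) (n : ℕ) (M : 𝒜) : Prop :=
  ∀ ⦃W⦄, 𝒲 W → ∀ ⦃i⦄, n < i → Subsingleton (Ext.{w} M W i)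

namespace ExtVanishesAbove

variable {𝒲 : 𝒜 → Prop} {n : ℕ}

theorem of_le {m : ℕ} {M : 𝒜} (hM : ExtVanishesAbove.{w} 𝒲 m M) (hmn : m ≤ n) :
    ExtVanishesAbove.{w} 𝒲 n M :=
  fun _ hW _ hi ↦ hM hW (hmn.trans_lt hi)

theorem X₁ (hS : S.ShortExact) (h₂ : ExtVanishesAbove.{w} 𝒲 n S.X₂)
    (h₃ : ExtVanishesAbove.{w} 𝒲 (n + 1) S.X₃) : ExtVanishesAbove.{w} 𝒲 n S.X₁ := by
  intro W hW i hi
  have := h₂ hW hi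
  have := h₃ hW (i := 1 + i) (by lia)
  exact subsingleton_ext_X₁ hS

theorem X₃ (hS : S.ShortExact) (h₁ : ExtVanishesAbove.{w} 𝒲 n S.X₁)
    (h₂ : ExtVanishesAbove.{w} 𝒲 (n + 1) S.X₂) : ExtVanishesAbove.{w} 𝒲 (n + 1) S.X₃ := by
  intro W hW i hi
  obtain ⟨j, rfl⟩ := Nat.exists_eq_add_of_le (Nat.one_le_of_lt hi)
  have := h₁ hW (i := j) (by lia)
  have := h₂ hW hi
  exact subsingleton_ext_X₃ hS

end ExtVanishesAbove

end ExtVanishing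

section ProjectiveResolution

open Abelian

theorem exists_surjective_exact_ker {S K L M N : Type*} [Semiring S] [AddCommMonoid K] [Module S K]
    [AddCommMonoid L] [Module S L] [AddCommMonoid M] [Module S M] [AddCommMonoid N] [Module S N]
    {d : K →ₗ[S] L} {f : L →ₗ[S] M} {g : M →ₗ[S] N} (hdf : Function.Exact d f)
    (hfg : Function.Exact f g) :
    ∃ p : L →ₗ[S] LinearMap.ker g, (LinearMap.ker g).subtype ∘ₗ p = f ∧
      Function.Surjective p ∧ Function.Exact d p := by
  refine ⟨f.codRestrict (LinearMap.ker g) hfg.apply_apply_eq_zero, rfl, ?_, fun y ↦ ?_⟩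
  · rintro ⟨y, hy⟩
    obtain ⟨z, rfl⟩ := (hfg y).1 hy
    exact ⟨z, rfl⟩
  · rw [← hdf y]
    exact Subtype.ext_iff

theorem subsingleton_ext_of_projective_resolution {S : Type u} [Ring S] {W : ModuleCat.{u} S}
    (i : ℕ) {P : ℕ → ModuleCat.{u} S} {d : ∀ n, P (n + 1) →ₗ[S] P n} {M : ModuleCat.{u} S}
    {π : P 0 →ₗ[S] M} (projective : ∀ n, Module.Projective S (P n))
    (exact_d : ∀ n, Function.Exact (d (n + 1)) (d n)) (exact_π : Function.Exact (d 0) π)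
    (surjective_π : Function.Surjective π)
    (hom_exact : ∀ n, Function.Exact (fun ψ : P n →ₗ[S] W ↦ ψ ∘ₗ d n)
      (fun ψ : P (n + 1) →ₗ[S] W ↦ ψ ∘ₗ d (n + 1))) :
    Subsingleton (Ext.{u} M W (1 + i)) := by
  induction i generalizing P M with
  | zero =>
    obtain ⟨p, subtype_comp_p, surjective_p, exact_p⟩ :=
      exists_surjective_exact_ker (exact_d 0) exact_π
    have : Projective π.shortComplexKer.X₂ := (IsProjective.iff_projective (P 0)).1 (projective 0)
    refine subsingleton_ext_one_of_forall_extends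
      (LinearMap.shortExact_shortComplexKer surjective_π) fun φ ↦ ?_
    obtain ⟨ψ, hψ⟩ := (hom_exact 0 (φ.hom ∘ₗ p)).1 <| by
      change (φ.hom ∘ₗ p) ∘ₗ d 1 = 0
      rw [LinearMap.comp_assoc, exact_p.linearMap_comp_eq_zero, LinearMap.comp_zero]
    refine ⟨ModuleCat.ofHom ψ, ?_⟩
    ext y
    obtain ⟨z, rfl⟩ := surjective_p y
    exact (congrArg ψ (LinearMap.congr_fun subtype_comp_p z)).trans (LinearMap.congr_fun hψ z)
  | succ i ih =>
    obtain ⟨p, -, surjective_p, exact_p⟩ := exists_surjective_exact_ker (exact_d 0) exact_π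
    have hS := LinearMap.shortExact_shortComplexKer surjective_π
    have : Projective π.shortComplexKer.X₂ := (IsProjective.iff_projective (P 0)).1 (projective 0)
    have : Subsingleton (Ext.{u} π.shortComplexKer.X₁ W (i + 1)) := by
      rw [add_comm]
      exact ih (M := ModuleCat.of S (LinearMap.ker π)) (fun n ↦ projective (n + 1))
        (fun n ↦ exact_d (n + 1)) exact_p surjective_p (fun n ↦ hom_exact (n + 1))
    have : Subsingleton (Ext.{u} π.shortComplexKer.X₂ W (1 + (i + 1))) := by
      rw [add_comm]
      exact Ext.subsingleton_of_projective _ _ _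
    exact subsingleton_ext_X₃ hS

end ProjectiveResolution

theorem IsSES.shortExact_s16 {A B D : ModuleCat.{u} R} {f : A →ₗ[R] B} {g : B →ₗ[R] D}
    (h : IsSES f g) :
    (ModuleCat.shortComplexOfCompEqZero f g h.2.1.linearMap_comp_eq_zero).ShortExact :=
  ModuleCat.shortComplex_shortExact _ h.2.1 h.1 h.2.2

section ResolutionDimension

variable {𝒢 𝒦 ω : ModuleCat.{u} R → Prop} {M : ModuleCat.{u} R} {n : ℕ}

/-- `M` has finite `𝒳`-resolution dimension. -/
def FiniteResDim (𝒳 : ModuleCat.{u} R → Prop) (M : ModuleCat.{u} R) : Prop :=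
  ∃ n, ResDimLE 𝒳 n M

/-- A class of modules containing the kernel of every epimorphism between two of its members. -/
def ClosedUnderEpiKernels (𝒢 : ModuleCat.{u} R → Prop) : Prop :=
  ∀ (A B D : ModuleCat.{u} R) (f : A →ₗ[R] B) (g : B →ₗ[R] D), IsSES f g → 𝒢 B → 𝒢 D → 𝒢 A

/-- A class of modules containing every direct summand of each of its members. -/
def ClosedUnderRetracts (𝒢 : ModuleCat.{u} R → Prop) : Prop :=
  ∀ ⦃M G : ModuleCat.{u} R⦄ (s : M →ₗ[R] G) (g : G →ₗ[R] M), g ∘ₗ s = LinearMap.id → 𝒢 G → 𝒢 M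

theorem ResDimLE.imp (h : ∀ M, 𝒢 M → 𝒦 M) (hM : ResDimLE 𝒢 n M) : ResDimLE 𝒦 n M := by
  induction n generalizing M with
  | zero => exact h M hM
  | succ n ih =>
    obtain ⟨A, g, hA, hg, hK⟩ := hM
    exact ⟨A, g, h A hA, hg, ih hK⟩

theorem ResDimLE.succ (closed : ClosedUnderEpiKernels 𝒢) (hM : ResDimLE 𝒢 n M) :
    ResDimLE 𝒢 (n + 1) M := by
  induction n generalizing M with
  | zero =>
    refine ⟨M, LinearMap.id, hM, Function.surjective_id, ?_⟩
    exact closed (.of R _) M M (LinearMap.ker LinearMap.id).subtype LinearMap.id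
      ⟨Submodule.subtype_injective _, LinearMap.exact_subtype_ker_map _,
        Function.surjective_id⟩ hM hM
  | succ n ih =>
    obtain ⟨A, g, hA, hg, hK⟩ := hM
    exact ⟨A, g, hA, hg, ih hK⟩

theorem ExtVanishesAbove.finiteResDim (hM : ExtVanishesAbove.{u} ω n M) :
    ExtVanishesAbove.{u} (FiniteResDim ω) n M := by
  rintro W ⟨k, hW⟩
  induction k generalizing W with
  | zero => exact hM hW
  | succ k ih =>
    intro i hi
    obtain ⟨A, g, hA, hg, hK⟩ := hW
    have : Subsingleton (Abelian.Ext.{u} M g.shortComplexKer.X₁ (i + 1)) := ih hK (by lia)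
    have : Subsingleton (Abelian.Ext.{u} M g.shortComplexKer.X₂ i) := hM hA hi
    exact subsingleton_ext_to_X₃ (LinearMap.shortExact_shortComplexKer hg)

theorem ResDimLE.extVanishesAbove (h : ∀ G, 𝒦 G → ExtVanishesAbove.{u} ω 0 G)
    (hM : ResDimLE 𝒦 n M) : ExtVanishesAbove.{u} ω n M := by
  induction n generalizing M with
  | zero => exact h M hM
  | succ n ih =>
    obtain ⟨A, g, hA, hg, hK⟩ := hM
    exact .X₃ (LinearMap.shortExact_shortComplexKer hg) (ih hK) ((h A hA).of_le (Nat.zero_le _))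

theorem mem_of_isSES_of_extVanishesAbove_zero (retracts : ClosedUnderRetracts 𝒢)
    {X G : ModuleCat.{u} R} {f : X →ₗ[R] G} {g : G →ₗ[R] M} (hS : IsSES f g) (hG : 𝒢 G)
    (hX : ω X) (hM : ExtVanishesAbove.{u} ω 0 M) : 𝒢 M := by
  have : Subsingleton (Abelian.Ext.{u} M X 1) := hM hX one_pos
  obtain ⟨s, hs⟩ := exists_section_of_subsingleton_ext_one hS.shortExact_s16
  exact retracts s.hom g (congrArg ModuleCat.Hom.hom hs) hG

theorem ResDimLE.of_extVanishesAbove (epiKernels : ClosedUnderEpiKernels 𝒢)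
    (retracts : ClosedUnderRetracts 𝒢) (vanishing : ∀ G, 𝒢 G → ExtVanishesAbove.{u} ω 0 G)
    (approximation : ∀ (M : ModuleCat.{u} R) (m : ℕ), ResDimLE 𝒢 (m + 1) M →
      ∃ (X G : ModuleCat.{u} R) (f : X →ₗ[R] G) (g : G →ₗ[R] M), IsSES f g ∧ 𝒢 G ∧ ω X)
    {m : ℕ} (hm : ResDimLE 𝒢 m M) (hM : ExtVanishesAbove.{u} ω n M) : ResDimLE 𝒢 n M := by
  induction n generalizing m M with
  | zero =>
    obtain ⟨X, G, f, g, hS, hG, hX⟩ := approximation M m (hm.succ epiKernels)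
    exact mem_of_isSES_of_extVanishesAbove_zero retracts hS hG hX hM
  | succ n ih =>
    obtain ⟨A, g, hA, hg, hK⟩ := hm.succ epiKernels
    have ker_vanishing : ExtVanishesAbove.{u} ω n g.shortComplexKer.X₁ :=
      .X₁ (LinearMap.shortExact_shortComplexKer hg) ((vanishing A hA).of_le (Nat.zero_le n)) hM
    exact ⟨A, g, hA, hg, ih hK ker_vanishing⟩

theorem resDimLE_iff_of_finiteResDim (epiKernels : ClosedUnderEpiKernels 𝒢)
    (retracts : ClosedUnderRetracts 𝒢) (le : ∀ G, 𝒢 G → 𝒦 G)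
    (vanishing : ∀ K, 𝒦 K → ExtVanishesAbove.{u} ω 0 K)
    (approximation : ∀ (M : ModuleCat.{u} R) (m : ℕ), ResDimLE 𝒢 (m + 1) M →
      ∃ (X G : ModuleCat.{u} R) (f : X →ₗ[R] G) (g : G →ₗ[R] M), IsSES f g ∧ 𝒢 G ∧
        FiniteResDim ω X)
    (hM : FiniteResDim 𝒢 M) (n : ℕ) : ResDimLE 𝒢 n M ↔ ResDimLE 𝒦 n M := by
  obtain ⟨m, hm⟩ := hM
  refine ⟨.imp le, fun h ↦ ?_⟩
  exact hm.of_extVanishesAbove epiKernels retracts (fun G hG ↦ (vanishing G (le G hG)).finiteResDim)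
    approximation (h.extVanishesAbove vanishing).finiteResDim

theorem ClosedUnderEpiKernels.closedUnderRetracts (closed : ClosedUnderEpiKernels 𝒢)
    (κ : Type u) [Infinite κ] (copower : ∀ G : ModuleCat.{u} R, 𝒢 G → 𝒢 (.of R (κ →₀ G))) :
    ClosedUnderRetracts 𝒢 := by
  intro M G s g hs hG
  obtain ⟨e⟩ := nonempty_finsupp_linearEquiv_prod_of_retract (κ := κ) hs
  refine closed M (.of R (κ →₀ G)) (.of R (κ →₀ G)) (e.symm.toLinearMap ∘ₗ LinearMap.inl R M _)
    (LinearMap.snd R M _ ∘ₗ e.toLinearMap) ⟨?_, ?_, ?_⟩ (copower G hG) (copower G hG)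
  · exact e.symm.injective.comp (LinearMap.inl_injective (R := R))
  · exact (LinearEquiv.conj_symm_exact_iff_exact (LinearMap.inl R M (κ →₀ G))
      (LinearMap.snd R M (κ →₀ G)) e).2 Function.Exact.inl_snd
  · exact Prod.snd_surjective.comp e.surjective

end ResolutionDimension

section GorensteinClasses

variable {C M : ModuleCat.{u} R}

theorem IsGCP.extVanishesAbove (hM : IsGCP C M) : ExtVanishesAbove.{u} (AddClass C) 0 M := by
  obtain ⟨X, ⟨e⟩⟩ := hM
  intro W hW i hi
  obtain ⟨j, rfl⟩ := Nat.exists_eq_add_of_le (Nat.one_le_of_lt hi)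
  refine subsingleton_ext_of_projective_resolution j
    (π := e.symm.toLinearMap ∘ₗ X.mid.rangeRestrict) X.projP X.exact_P (fun y ↦ ?_)
    (e.symm.surjective.comp X.mid.surjective_rangeRestrict) (X.hom_exact W hW).2.2.2
  rw [← X.exact_mid y]
  simp [Subtype.ext_iff]

theorem AddClass.copower (κ : Type u) {A : ModuleCat.{u} R} (hA : AddClass C A) :
    AddClass C (.of R (κ →₀ A)) := by
  obtain ⟨ι, s, p, hps⟩ := hA
  let e : (κ × ι →₀ C) ≃ₗ[R] (κ →₀ ι →₀ C) := Finsupp.curryLinearEquiv R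
  refine ⟨κ × ι, e.symm.toLinearMap ∘ₗ Finsupp.mapRange.linearMap s,
    Finsupp.mapRange.linearMap p ∘ₗ e.toLinearMap, ?_⟩
  refine LinearMap.ext fun x ↦ Finsupp.ext fun k ↦ ?_
  simpa using LinearMap.congr_fun hps (x k)

/-- The termwise copower of a complex defining a `PG_CF` module, which exhibits the copower of
that module as `PG_CF`. -/
noncomputable def PGCFComplex.copower (κ : Type u) (X : PGCFComplex C) : PGCFComplex C where
  P n := .of R (κ →₀ X.P n)
  A n := .of R (κ →₀ X.A n)
  projP n := by
    classical
    have := X.projP n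
    exact .of_equiv (finsuppLequivDFinsupp R).symm
  memA n := (X.memA n).copower κ
  dP n := Finsupp.mapRange.linearMap (X.dP n)
  mid := Finsupp.mapRange.linearMap X.mid
  dA n := Finsupp.mapRange.linearMap (X.dA n)
  exact_P n := exact_finsupp_mapRange (X.exact_P n)
  exact_mid := exact_finsupp_mapRange X.exact_mid
  exact_A0 := exact_finsupp_mapRange X.exact_A0
  exact_A n := exact_finsupp_mapRange (X.exact_A n)
  tensor_exact Y hY := by
    obtain ⟨hP, hmid, hA0, hA⟩ := X.tensor_exact Y hY
    exact ⟨fun n ↦ exact_lTensor_finsupp_mapRange (hP n), exact_lTensor_finsupp_mapRange hmid,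
      exact_lTensor_finsupp_mapRange hA0, fun n ↦ exact_lTensor_finsupp_mapRange (hA n)⟩

theorem IsPGCF.copower (κ : Type u) (hM : IsPGCF C M) : IsPGCF C (.of R (κ →₀ M)) := by
  obtain ⟨X, ⟨e⟩⟩ := hM
  exact ⟨X.copower κ, ⟨Finsupp.mapRange.linearEquiv e ≪≫ₗ finsuppRangeLEquiv κ X.mid⟩⟩

end GorensteinClasses

theorem statement16_general (C : ModuleCat.{u} R) (epiKernels : ClosedUnderEpiKernels (IsPGCF C))
    (le : ∀ M : ModuleCat.{u} R, IsPGCF C M → IsGCP C M)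
    (approximation : ∀ (M : ModuleCat.{u} R) (n : ℕ), ResDimLE (IsPGCF C) (n + 1) M →
      ∃ (X G : ModuleCat.{u} R) (f : X →ₗ[R] G) (g : G →ₗ[R] M),
        IsSES f g ∧ IsPGCF C G ∧ ResDimLE (AddClass C) n X)
    (M : ModuleCat.{u} R) (hM : FiniteResDim (IsPGCF C) M) :
    (∀ n, ResDimLE (IsPGCF C) n M ↔ ResDimLE (IsGCP C) n M) ∧ (IsGCP C M → IsPGCF C M) := by
  have retracts : ClosedUnderRetracts (IsPGCF C) :=
    epiKernels.closedUnderRetracts (ULift.{u} ℕ) fun _ ↦ .copower _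
  have resDimLE_iff := resDimLE_iff_of_finiteResDim epiKernels retracts le
    (fun _ ↦ IsGCP.extVanishesAbove)
    (fun N n hN ↦ by
      obtain ⟨X, G, f, g, hS, hG, hX⟩ := approximation N n hN
      exact ⟨X, G, f, g, hS, hG, n, hX⟩) hM
  exact ⟨resDimLE_iff, (resDimLE_iff 0).2⟩

/-- Let `C` be Tor-∏-orthogonal and pure projective, assume
`PG_CF(R) ⊆ ^⊥⟨C⟩` and that `PG_CF(R)` is projectively resolving. Then (together with the
facts recorded from the paper) every `G_C`-projective module of finite `PG_CF` dimension is
`PG_CF`; more precisely, if `M` has finite `PG_CF` dimension then its `G_C`-projective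
dimension equals its `PG_CF` dimension. -/
theorem statement16 (C : ModuleCat.{u} R)
    (h1 : TorProdOrthogonal C) (h2 : PureProjective C)
    (h3 : ∀ M : ModuleCat.{u} R, IsPGCF C M → ∀ A : ModuleCat.{u} R,
      defClosure (fun N => N = C) A → ∀ i, 1 ≤ i → extZero i M A)
    (h4proj : ∀ P : ModuleCat.{u} R, Module.Projective R P → IsPGCF C P)
    (h4ext : ∀ (A B D : ModuleCat.{u} R) (f : A →ₗ[R] B) (g : B →ₗ[R] D),
      IsSES f g → IsPGCF C A → IsPGCF C D → IsPGCF C B)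
    (h4ker : ∀ (A B D : ModuleCat.{u} R) (f : A →ₗ[R] B) (g : B →ₗ[R] D),
      IsSES f g → IsPGCF C B → IsPGCF C D → IsPGCF C A)
    (hfact1 : ∀ M : ModuleCat.{u} R, IsPGCF C M → IsGCP C M)
    (hfact2 : ∀ X : ModuleCat.{u} R, (∃ n, ResDimLE (AddClass C) n X) →
      ∀ G : ModuleCat.{u} R, IsPGCF C G → extZero 1 G X)
    (hfact3 : ∀ (M : ModuleCat.{u} R) (n : ℕ), ResDimLE (IsPGCF C) n M →
      ∃ (X G : ModuleCat.{u} R) (f : X →ₗ[R] G) (g : G →ₗ[R] M),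
        IsSES f g ∧ IsPGCF C G ∧
        (if n = 0 then Subsingleton X else ResDimLE (AddClass C) (n - 1) X))
    (M : ModuleCat.{u} R) (hfin : ∃ n, ResDimLE (IsPGCF C) n M) :
    (∀ n, ResDimLE (IsPGCF C) n M ↔ ResDimLE (IsGCP C) n M) ∧
    (IsGCP C M → IsPGCF C M) :=
  statement16_general C h4ker hfact1 (fun M n ↦ hfact3 M (n + 1)) M hfin
end
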